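/- arXiv:1407.2679 — 10 statements merged into one kernel-verified Lean document; each statement's English description precedes it below -/
import Mathlib

section
/- Let π be an affine function on ℝⁿ, let T ⊆ ℕⁿ, and let f, g be polynomials in ℝ[x₁,…,xₙ] with supports T₁ = Support(f) and T₂ = Support(g). If T ⊆ {y ∈ ℝⁿ : π(y) = 0}, 2T₁ ⊆ {y : π(y) ≥ 0}, and 2T₂ ⊆ {y : π(y) > 0} (where 2S = {2a : a ∈ S}), then Proj(f·g, T) = 0. -/
open MvPolynomial
open scoped Classical

noncomputable section

/-- Embed an exponent vector `a ∈ ℕⁿ` into `ℝⁿ`. -/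
def toR {n : ℕ} (a : Fin n →₀ ℕ) : Fin n → ℝ := fun i => (a i : ℝ)

/-- `p` is a sum of squares of polynomials. -/
def IsSOS {n : ℕ} (p : MvPolynomial (Fin n) ℝ) : Prop :=
  ∃ (s : ℕ) (q : Fin s → MvPolynomial (Fin n) ℝ), p = ∑ i, (q i) ^ 2

/-- `Proj(p,T)` for `T ⊆ ℝⁿ`: delete every term of `p` whose exponent vector is not in `T`. -/
def projR {n : ℕ} (p : MvPolynomial (Fin n) ℝ) (T : Set (Fin n → ℝ)) :
    MvPolynomial (Fin n) ℝ :=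
  ∑ a ∈ p.support, if toR a ∈ T then monomial a (p.coeff a) else 0

/-- `Proj(p,T)` for `T ⊆ ℕⁿ`. -/
def projN {n : ℕ} (p : MvPolynomial (Fin n) ℝ) (T : Set (Fin n →₀ ℕ)) :
    MvPolynomial (Fin n) ℝ :=
  ∑ a ∈ p.support, if a ∈ T then monomial a (p.coeff a) else 0

/-- The Newton polytope of `p`: convex hull of its support in `ℝⁿ`. -/
def newton {n : ℕ} (p : MvPolynomial (Fin n) ℝ) : Set (Fin n → ℝ) :=
  convexHull ℝ (toR '' ↑p.support)

/-- `F` is an (exposed) face of `N`: `F ⊆ N`, and either `F = N` or there is an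
affine function vanishing on `F` and strictly positive on `N \ F`. -/
def IsFace {n : ℕ} (N F : Set (Fin n → ℝ)) : Prop :=
  F ⊆ N ∧ (F = N ∨ ∃ π : (Fin n → ℝ) →ᵃ[ℝ] ℝ,
    (∀ x ∈ F, π x = 0) ∧ ∀ x ∈ N \ F, 0 < π x)

/-- `SOSS(p,G)`: whenever `p` is SOS, it has an SOS decomposition all of whose
summands have support contained in `G`. -/
def SOSS {n : ℕ} (p : MvPolynomial (Fin n) ℝ) (G : Finset (Fin n →₀ ℕ)) : Prop :=
  IsSOS p → ∃ (s : ℕ) (q : Fin s → MvPolynomial (Fin n) ℝ),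
    p = ∑ i, (q i) ^ 2 ∧ ∀ i, (q i).support ⊆ G

/-- `V(p,G)`: elements `a ∈ G` whose double has the unique decomposition `a + a` in `G + G`. -/
def VSet {n : ℕ} (G : Finset (Fin n →₀ ℕ)) : Set (Fin n →₀ ℕ) :=
  {a | a ∈ G ∧ ∀ b ∈ G, ∀ r ∈ G, b + r = a + a → b = a ∧ r = a}

/-- Membership in `Relat(a)` (least fixed point of the recursive definition):
`Relat(a) = {a/2}` if the unique decomposition of `a` in `G + G` is `a/2 + a/2`;
otherwise `Relat(a)` is the union of `Relat(2b) ∪ Relat(2r)` over decompositions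
`a = b + r` with `b ≠ r`, `b, r ∈ G`; and `Relat(a) = ∅` if `a ∉ G + G`. -/
inductive RelatMem {n : ℕ} (G : Finset (Fin n →₀ ℕ)) :
    (Fin n →₀ ℕ) → (Fin n →₀ ℕ) → Prop
  | base (a c : Fin n →₀ ℕ) (hc : c ∈ G) (hcc : c + c = a)
      (huniq : ∀ b ∈ G, ∀ r ∈ G, b + r = a → b = c) : RelatMem G a c
  | stepL (a b r v : Fin n →₀ ℕ) (hb : b ∈ G) (hr : r ∈ G) (hne : b ≠ r)
      (hbr : b + r = a) (hv : RelatMem G (b + b) v) : RelatMem G a v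
  | stepR (a b r v : Fin n →₀ ℕ) (hb : b ∈ G) (hr : r ∈ G) (hne : b ≠ r)
      (hbr : b + r = a) (hv : RelatMem G (r + r) v) : RelatMem G a v

/-- `Relat(a)` as a set. -/
def Relat {n : ℕ} (G : Finset (Fin n →₀ ℕ)) (a : Fin n →₀ ℕ) : Set (Fin n →₀ ℕ) :=
  {v | RelatMem G a v}

/-- `σ(T) = {r ∈ G : Relat(2r) ⊆ T}`. -/
def sigmaSet {n : ℕ} (G : Finset (Fin n →₀ ℕ)) (T : Set (Fin n →₀ ℕ)) :
    Set (Fin n →₀ ℕ) :=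
  {r | r ∈ G ∧ Relat G (r + r) ⊆ T}

/-- `p` is a split polynomial with respect to `T₁, …, T_u ⊆ V(p,G)`. -/
def IsSplit {n : ℕ} (p : MvPolynomial (Fin n) ℝ) (G : Finset (Fin n →₀ ℕ))
    (u : ℕ) (T : Fin u → Set (Fin n →₀ ℕ)) : Prop :=
  SOSS p G ∧ (∀ i, T i ⊆ VSet G) ∧ (∀ i, (T i).Nonempty) ∧
  (∀ i j, i ≠ j → Disjoint (T i) (T j)) ∧
  (∀ i, ∀ a ∈ sigmaSet G (T i), ∀ b ∈ sigmaSet G (T i), Relat G (a + b) ⊆ T i) ∧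
  ∀ a ∈ p.support, ∃! i, Relat G a ⊆ T i

/-- The sub-polynomial `Σ_{a ∈ Support(p), Relat(a) ⊆ T} c_a x^a` of `p`. -/
def projRelat {n : ℕ} (p : MvPolynomial (Fin n) ℝ) (G : Finset (Fin n →₀ ℕ))
    (T : Set (Fin n →₀ ℕ)) : MvPolynomial (Fin n) ℝ :=
  ∑ a ∈ p.support, if Relat G a ⊆ T then monomial a (p.coeff a) else 0

/-- `p` is a convex cover polynomial: some pairwise disjoint faces of `New(p)`
cover `Support(p)`. -/
def IsConvexCover {n : ℕ} (p : MvPolynomial (Fin n) ℝ) : Prop :=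
  ∃ (u : ℕ) (F : Fin u → Set (Fin n → ℝ)),
    (∀ i, IsFace (newton p) (F i)) ∧
    (∀ i j, i ≠ j → Disjoint (F i) (F j)) ∧
    toR '' ↑p.support ⊆ ⋃ i, F i

end

/-- if `T ⊆ {π = 0}`, `2·Support(f) ⊆ {π ≥ 0}` and `2·Support(g) ⊆ {π > 0}`
for an affine function `π`, then `Proj(f·g, T) = 0`. -/
theorem statement0 {n : ℕ} (π : (Fin n → ℝ) →ᵃ[ℝ] ℝ) (T : Set (Fin n → ℝ))
    (f g : MvPolynomial (Fin n) ℝ)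
    (hT : ∀ x ∈ T, π x = 0)
    (hf : ∀ a ∈ f.support, 0 ≤ π (toR a + toR a))
    (hg : ∀ a ∈ g.support, 0 < π (toR a + toR a)) :
    projR (f * g) T = 0 := by
  have key : ∀ x y : Fin n → ℝ, π (x + x) + π (y + y) = 2 * π (x + y) := by
    intro x y
    have h : ∀ z, π z = π.linear z + π 0 := by
      intro z
      have := π.map_vadd 0 z
      simpa using this
    rw [h (x + x), h (y + y), h (x + y)]
    simp only [map_add]
    ring
  unfold projR
  apply Finset.sum_eq_zero
  intro c hc
  rw [if_neg]
  intro hcT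
  obtain ⟨a, ha, b, hb, rfl⟩ := Finset.mem_add.mp (MvPolynomial.support_mul f g hc)
  have h0 := hT _ hcT
  have e : toR (a + b) = toR a + toR b := by
    funext i
    simp [toR]
  rw [e] at h0
  have h1 := key (toR a) (toR b)
  have h2 := hf a ha
  have h3 := hg b hb
  linarith
end

section
/- If a polynomial p ∈ ℝ[x₁,…,xₙ] is a sum of squares of polynomials, then for every face F of the Newton polytope New(p), the polynomial Proj(p,F) is a sum of squares of polynomials. -/
open MvPolynomial
open scoped Classical

theorem level_sq {n : ℕ} (w : Fin n → ℝ) (t : ℝ) (q : MvPolynomial (Fin n) ℝ)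
    (h : ∀ a, q.coeff a ≠ 0 → t ≤ Finsupp.weight w a) :
    weightedHomogeneousComponent w (t + t) (q ^ 2) =
      (weightedHomogeneousComponent w t q) ^ 2 := by
  ext d
  rw [coeff_weightedHomogeneousComponent, sq, sq, coeff_mul, coeff_mul]
  simp only [coeff_weightedHomogeneousComponent]
  have key : ∀ x ∈ Finset.HasAntidiagonal.antidiagonal d,
      Finsupp.weight w x.1 + Finsupp.weight w x.2 = Finsupp.weight w d := by
    intro x hx
    rw [← map_add, Finset.HasAntidiagonal.mem_antidiagonal.1 hx]
  split_ifs with hd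
  · apply Finset.sum_congr rfl
    intro x hx
    have hk := key x hx
    by_cases h1 : q.coeff x.1 = 0
    · simp [h1]
    by_cases h2 : q.coeff x.2 = 0
    · simp [h2]
    have := h _ h1
    have := h _ h2
    rw [if_pos (by linarith), if_pos (by linarith)]
  · symm
    apply Finset.sum_eq_zero
    intro x hx
    have hk := key x hx
    split_ifs with h1 h2
    · exact absurd (by rw [← hk, h1, h2]) hd
    all_goals simp

theorem sos_zero {n s : ℕ} (q : Fin s → MvPolynomial (Fin n) ℝ)
    (h : ∑ i, (q i) ^ 2 = 0) (i : Fin s) : q i = 0 := by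
  apply MvPolynomial.funext
  intro x
  have := congrArg (MvPolynomial.eval x) h
  simp only [map_sum, map_pow, map_zero] at this
  rw [Finset.sum_eq_zero_iff_of_nonneg (fun i _ => sq_nonneg _)] at this
  simpa using this i (Finset.mem_univ i)

theorem level_sos {n s : ℕ} (w : Fin n → ℝ) (t : ℝ) (q : Fin s → MvPolynomial (Fin n) ℝ)
    (h : ∀ a, (∑ i, (q i) ^ 2).coeff a ≠ 0 → t + t ≤ Finsupp.weight w a) :
    ∀ i a, (q i).coeff a ≠ 0 → t ≤ Finsupp.weight w a := by
  by_contra! hc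
  obtain ⟨i, a, ha, hat⟩ := hc
  let S : Finset (Fin n →₀ ℕ) := Finset.univ.biUnion fun i => (q i).support
  have hS : ∀ b, b ∈ S ↔ ∃ i, (q i).coeff b ≠ 0 := by
    intro b; simp [S]
  obtain ⟨b, hb, hmin⟩ := S.exists_min_image (fun b => Finsupp.weight w b)
    ⟨a, (hS a).2 ⟨i, ha⟩⟩
  have hlt : Finsupp.weight w b < t := lt_of_le_of_lt (hmin a ((hS a).2 ⟨i, ha⟩)) hat
  obtain ⟨j, hj⟩ := (hS b).1 hb
  have h0 : ∑ i, (weightedHomogeneousComponent w (Finsupp.weight w b) (q i)) ^ 2 = 0 := by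
    rw [← Finset.sum_congr rfl fun i _ => level_sq w (Finsupp.weight w b) (q i)
      (fun a ha => hmin a ((hS a).2 ⟨i, ha⟩)), ← map_sum]
    ext d
    rw [coeff_weightedHomogeneousComponent, coeff_zero]
    split_ifs with hd
    · by_contra hne
      have := h d hne
      linarith
    · rfl
  have := congrArg (coeff b) (sos_zero _ h0 j)
  rw [coeff_weightedHomogeneousComponent, if_pos rfl] at this
  exact hj (by simpa using this)

/-- if `p` is SOS then `Proj(p,F)` is SOS for every face `F` of `New(p)`. -/
theorem statement2 {n : ℕ} (p : MvPolynomial (Fin n) ℝ) (hp : IsSOS p)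
    (F : Set (Fin n → ℝ)) (hF : IsFace (newton p) F) :
    IsSOS (projR p F) := by
  obtain ⟨hFN, hF⟩ := hF
  have hπ : ∃ π : (Fin n → ℝ) →ᵃ[ℝ] ℝ,
      (∀ x ∈ F, π x = 0) ∧ ∀ x ∈ newton p \ F, 0 < π x := by
    rcases hF with rfl | h
    · exact ⟨0, by simp, by simp⟩
    · exact h
  obtain ⟨π, h0, hpos⟩ := hπ
  let w : Fin n → ℝ := fun i => π.linear (Pi.single i 1)
  have hw : ∀ a : Fin n →₀ ℕ, π (toR a) = Finsupp.weight w a + π 0 := by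
    intro a
    have h1 : π (toR a) = π.linear (toR a) + π 0 := by
      have := congrFun (AffineMap.decomp π) (toR a)
      simpa using this
    rw [h1, LinearMap.pi_apply_eq_sum_univ π.linear (toR a), Finsupp.weight_apply,
      Finsupp.sum_fintype _ _ (by simp)]
    congr 1
    apply Finset.sum_congr rfl
    intro i _
    simp only [toR, w, nsmul_eq_mul, smul_eq_mul]
    congr 2
    ext j
    simp [Pi.single_apply, eq_comm]
  have hN : ∀ a ∈ p.support, toR a ∈ newton p := fun a ha =>
    subset_convexHull ℝ _ ⟨a, ha, rfl⟩
  have hc : ∃ t : ℝ, t + t = - π 0 := ⟨-π 0 / 2, by ring⟩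
  obtain ⟨t, ht⟩ := hc
  have hmem : ∀ a ∈ p.support, (toR a ∈ F ↔ Finsupp.weight w a = t + t) := by
    intro a ha
    constructor
    · intro h
      have := h0 _ h
      rw [hw] at this
      linarith
    · intro h
      by_contra hne
      have := hpos _ ⟨hN a ha, hne⟩
      rw [hw] at this
      linarith
  have hge : ∀ a, p.coeff a ≠ 0 → t + t ≤ Finsupp.weight w a := by
    intro a ha
    have ha : a ∈ p.support := mem_support_iff.2 ha
    by_cases h : toR a ∈ F
    · exact ((hmem a ha).1 h).ge
    · have := hpos _ ⟨hN a ha, h⟩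
      rw [hw] at this
      linarith
  have hproj : projR p F = weightedHomogeneousComponent w (t + t) p := by
    ext d
    rw [coeff_weightedHomogeneousComponent, projR, coeff_sum]
    by_cases hd : d ∈ p.support
    · rw [Finset.sum_eq_single d]
      · by_cases h : toR d ∈ F
        · rw [if_pos h, if_pos ((hmem d hd).1 h)]; simp
        · rw [if_neg h, if_neg (fun h' => h ((hmem d hd).2 h'))]; simp
      · intro b _ hb
        split_ifs <;> simp [coeff_monomial, hb]
      · intro h; exact absurd hd h
    · rw [notMem_support_iff.1 hd, ite_self]
      apply Finset.sum_eq_zero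
      intro b hb
      have : b ≠ d := fun h => hd (h ▸ hb)
      split_ifs <;> simp [coeff_monomial, this]
  obtain ⟨s, q, rfl⟩ := hp
  refine ⟨s, fun i => weightedHomogeneousComponent w t (q i), ?_⟩
  rw [hproj, map_sum]
  exact Finset.sum_congr rfl fun i _ => level_sq w t (q i) (level_sos w t q hge i)
end

section
/- Suppose G ⊆ ℕⁿ is a finite set satisfying SOSS(p,G) for a polynomial p ∈ ℝ[x₁,…,xₙ], and F is a face of the polytope conv(G+G) (where G+G is the Minkowski sum). Let T = {a ∈ V(p,G) : 2a ∈ F} and G₁ = (G+G) ∩ F. Then Relat(a) ⊆ T for every a ∈ G₁. -/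
open MvPolynomial
open scoped Classical

open scoped Pointwise

lemma face_double {n : ℕ} (G : Finset (Fin n →₀ ℕ)) (F : Set (Fin n → ℝ))
    (hF : IsFace (convexHull ℝ (toR '' ((G : Set (Fin n →₀ ℕ)) + (G : Set (Fin n →₀ ℕ))))) F)
    (b r : Fin n →₀ ℕ) (hb : b ∈ G) (hr : r ∈ G) (h : toR (b + r) ∈ F) : toR (b + b) ∈ F := by
  have mem : ∀ x ∈ G, ∀ y ∈ G, toR (x + y) ∈
      convexHull ℝ (toR '' ((G : Set (Fin n →₀ ℕ)) + (G : Set (Fin n →₀ ℕ)))) := fun x hx y hy =>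
    subset_convexHull ℝ _ ⟨x + y, Set.add_mem_add hx hy, rfl⟩
  obtain ⟨-, rfl | ⟨π, h0, hpos⟩⟩ := hF
  · exact mem b hb b hb
  · by_contra hn
    have h1 := hpos _ ⟨mem b hb b hb, hn⟩
    have h2 : 0 ≤ π (toR (r + r)) := by
      by_cases hr' : toR (r + r) ∈ F
      · exact (h0 _ hr').ge
      · exact (hpos _ ⟨mem r hr r hr, hr'⟩).le
    have h3 := h0 _ h
    have e : toR (b + r) = AffineMap.lineMap (toR (b + b)) (toR (r + r)) (1 / 2 : ℝ) := by
      ext i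
      simp [toR, AffineMap.lineMap_apply]
      ring
    rw [e, AffineMap.apply_lineMap, AffineMap.lineMap_apply] at h3
    simp only [vsub_eq_sub, vadd_eq_add, smul_eq_mul] at h3
    linarith

/-- if `F` is a face of `conv(G+G)` and `T = {a ∈ V(p,G) : 2a ∈ F}`,
then `Relat(a) ⊆ T` for every `a ∈ (G+G) ∩ F`. -/
theorem statement5 {n : ℕ} (p : MvPolynomial (Fin n) ℝ) (G : Finset (Fin n →₀ ℕ))
    (hG : SOSS p G) (F : Set (Fin n → ℝ))
    (hF : IsFace (convexHull ℝ (toR '' ((G : Set (Fin n →₀ ℕ)) + (G : Set (Fin n →₀ ℕ))))) F) :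
    ∀ a ∈ ((G : Set (Fin n →₀ ℕ)) + (G : Set (Fin n →₀ ℕ))), toR a ∈ F →
      Relat G a ⊆ {x | x ∈ VSet G ∧ toR (x + x) ∈ F} := by
  intro a _ ha v hv
  have hv' : RelatMem G a v := hv
  clear hv
  induction hv' with
  | base a c hc hcc huniq =>
    subst hcc
    exact ⟨⟨hc, fun b hb r hr h => ⟨huniq b hb r hr h, huniq r hr b hb (by rw [add_comm, h])⟩⟩, ha⟩
  | stepL a b r v hb hr hne hbr hv ih =>
    subst hbr
    exact ih (Set.add_mem_add hb hb) (face_double G F hF b r hb hr ha)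
  | stepR a b r v hb hr hne hbr hv ih =>
    subst hbr
    exact ih (Set.add_mem_add hr hr) (face_double G F hF r b hr hb (by rwa [add_comm]))
end

section
/- Suppose p ∈ ℝ[x₁,…,xₙ] is SOS, say p = Σᵢ₌₁ˢ hᵢ² with Support(hᵢ) ⊆ G for a finite set G ⊆ ℕⁿ. Then for any T ⊆ V(p,G) and any b ∈ G+G: if Relat(b) ⊆ T, then b does not belong to the support of p − Σᵢ₌₁ˢ Proj(hᵢ, σ(T))². -/
open MvPolynomial
open scoped Classical

open scoped Pointwise

theorem coeff_projN_aux {n : ℕ} (p : MvPolynomial (Fin n) ℝ) (T : Set (Fin n →₀ ℕ))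
    (x : Fin n →₀ ℕ) : (projN p T).coeff x = if x ∈ T then p.coeff x else 0 := by
  unfold projN
  rw [MvPolynomial.coeff_sum]
  have h1 : ∀ a ∈ p.support, MvPolynomial.coeff x
      (if a ∈ T then monomial a (p.coeff a) else 0) =
      if a = x then (if x ∈ T then p.coeff x else 0) else 0 := by
    intro a _
    by_cases hax : a = x
    · subst hax
      by_cases haT : a ∈ T <;> simp [haT]
    · by_cases haT : a ∈ T <;> simp [haT, hax, MvPolynomial.coeff_monomial]
  rw [Finset.sum_congr rfl h1, Finset.sum_ite_eq']
  by_cases hx : x ∈ p.support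
  · simp only [hx, if_true]
  · have h0 : p.coeff x = 0 := by simpa using hx
    simp [h0]

/-- if `p = Σ hᵢ²` with `Support(hᵢ) ⊆ G`, `T ⊆ V(p,G)`, `b ∈ G+G` and
`Relat(b) ⊆ T`, then `b ∉ Support(p − Σᵢ Proj(hᵢ, σ(T))²)`. -/
theorem statement6 {n : ℕ} (p : MvPolynomial (Fin n) ℝ) (G : Finset (Fin n →₀ ℕ))
    (s : ℕ) (h : Fin s → MvPolynomial (Fin n) ℝ)
    (hp : p = ∑ i, (h i) ^ 2) (hsupp : ∀ i, (h i).support ⊆ G)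
    (T : Set (Fin n →₀ ℕ)) (hT : T ⊆ VSet G)
    (b : Fin n →₀ ℕ) (hb : b ∈ ((G : Set (Fin n →₀ ℕ)) + (G : Set (Fin n →₀ ℕ))))
    (hrel : Relat G b ⊆ T) :
    b ∉ (p - ∑ i, (projN (h i) (sigmaSet G T)) ^ 2).support := by
  have key : ∀ i, MvPolynomial.coeff b ((h i) ^ 2) =
      MvPolynomial.coeff b ((projN (h i) (sigmaSet G T)) ^ 2) := by
    intro i
    rw [pow_two, pow_two, MvPolynomial.coeff_mul, MvPolynomial.coeff_mul]
    refine Finset.sum_congr rfl ?_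
    rintro ⟨x, y⟩ hxy
    rw [Finset.HasAntidiagonal.mem_antidiagonal] at hxy
    simp only at hxy
    simp only [coeff_projN_aux]
    by_cases hx : (h i).coeff x = 0
    · simp [hx]
    by_cases hy : (h i).coeff y = 0
    · simp [hy]
    have hxG : x ∈ G := hsupp i (MvPolynomial.mem_support_iff.mpr hx)
    have hyG : y ∈ G := hsupp i (MvPolynomial.mem_support_iff.mpr hy)
    have hxs : x ∈ sigmaSet G T ∧ y ∈ sigmaSet G T := by
      by_cases hne : x = y
      · subst hne
        rw [← hxy] at hrel
        exact ⟨⟨hxG, hrel⟩, ⟨hxG, hrel⟩⟩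
      · exact ⟨⟨hxG, fun v hv => hrel (RelatMem.stepL b x y v hxG hyG hne hxy hv)⟩,
          ⟨hyG, fun v hv => hrel (RelatMem.stepR b x y v hxG hyG hne hxy hv)⟩⟩
    rw [if_pos hxs.1, if_pos hxs.2]
  rw [MvPolynomial.notMem_support_iff, hp, MvPolynomial.coeff_sub, MvPolynomial.coeff_sum,
    MvPolynomial.coeff_sum, Finset.sum_congr rfl (fun i _ => key i), sub_self]
end

section
/- Assume p = Σ_a c_a x^a ∈ ℝ[x₁,…,xₙ] is SOS, G ⊆ ℕⁿ is a finite set satisfying SOSS(p,G), and T ⊆ V(p,G). If Relat(a+b) ⊆ T for all a, b ∈ σ(T), then the polynomial p₁ = Σ_{a ∈ Support(p), Relat(a) ⊆ T} c_a x^a is SOS. -/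
open MvPolynomial
open scoped Classical

/-- restriction of a polynomial to a set of exponents -/
lemma coeff_sum_ite {n : ℕ} (p : MvPolynomial (Fin n) ℝ) (P : (Fin n →₀ ℕ) → Prop)
    (m : Fin n →₀ ℕ) :
    coeff m (∑ a ∈ p.support, if P a then monomial a (p.coeff a) else 0)
      = if P m then coeff m p else 0 := by
  rw [coeff_sum]
  have h : ∀ a ∈ p.support, coeff m (if P a then monomial a (p.coeff a) else 0)
      = if a = m then (if P m then coeff m p else 0) else 0 := by
    intro a _
    by_cases hP : P a
    · by_cases ham : a = m
      · subst ham; simp [hP]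
      · simp [hP, ham, coeff_monomial]
    · by_cases ham : a = m
      · subst ham; simp [hP]
      · simp [hP, ham]
  rw [Finset.sum_congr rfl h, Finset.sum_ite_eq']
  by_cases hm : m ∈ p.support
  · simp [hm]
  · rw [if_neg hm, notMem_support_iff.mp hm]; simp

/-- if `p` is SOS, `SOSS(p,G)` holds, `T ⊆ V(p,G)`, and
`Relat(a+b) ⊆ T` for all `a, b ∈ σ(T)`, then `p₁ = Σ_{a ∈ Support(p), Relat(a) ⊆ T} c_a x^a`
is SOS. -/
theorem statement7 {n : ℕ} (p : MvPolynomial (Fin n) ℝ) (G : Finset (Fin n →₀ ℕ))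
    (hsos : IsSOS p) (hG : SOSS p G)
    (T : Set (Fin n →₀ ℕ)) (hT : T ⊆ VSet G)
    (hclosed : ∀ a ∈ sigmaSet G T, ∀ b ∈ sigmaSet G T, Relat G (a + b) ⊆ T) :
    IsSOS (projRelat p G T) := by
  obtain ⟨s, q, hp, hq⟩ := hG hsos
  refine ⟨s, fun i => projN (q i) (sigmaSet G T), ?_⟩
  ext m
  unfold projRelat projN
  rw [coeff_sum_ite p (fun a => Relat G a ⊆ T), coeff_sum]
  conv_lhs => rw [hp, coeff_sum]
  simp only [pow_two, coeff_mul]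
  have hc : ∀ i a, coeff a (∑ a ∈ (q i).support,
      if a ∈ sigmaSet G T then monomial a ((q i).coeff a) else 0)
      = if a ∈ sigmaSet G T then coeff a (q i) else 0 := fun i a =>
    coeff_sum_ite (q i) (fun a => a ∈ sigmaSet G T) a
  simp only [hc]
  split_ifs with hm
  · refine Finset.sum_congr rfl fun i _ => Finset.sum_congr rfl fun x hx => ?_
    rw [Finset.HasAntidiagonal.mem_antidiagonal] at hx
    by_cases h1 : x.1 ∈ (q i).support
    · by_cases h2 : x.2 ∈ (q i).support
      · have g1 := hq i h1
        have g2 := hq i h2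
        have key : x.1 ∈ sigmaSet G T ∧ x.2 ∈ sigmaSet G T := by
          by_cases hne : x.1 = x.2
          · have e1 : x.1 + x.1 = m := by rw [← hx, ← hne]
            have : x.1 ∈ sigmaSet G T := ⟨g1, by rw [e1]; exact hm⟩
            exact ⟨this, hne ▸ this⟩
          · exact ⟨⟨g1, fun v hv => hm (RelatMem.stepL m x.1 x.2 v g1 g2 hne hx hv)⟩,
              ⟨g2, fun v hv => hm (RelatMem.stepR m x.1 x.2 v g1 g2 hne hx hv)⟩⟩
        rw [if_pos key.1, if_pos key.2]
      · rw [notMem_support_iff.mp h2]; simp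
    · rw [notMem_support_iff.mp h1]; simp
  · symm
    refine Finset.sum_eq_zero fun i _ => Finset.sum_eq_zero fun x hx => ?_
    rw [Finset.HasAntidiagonal.mem_antidiagonal] at hx
    by_cases h1 : x.1 ∈ sigmaSet G T
    · by_cases h2 : x.2 ∈ sigmaSet G T
      · exact absurd (hx ▸ hclosed _ h1 _ h2) hm
      · simp [h2]
    · simp [h1]
end

section
/- Suppose p = Σ_a c_a x^a ∈ ℝ[x₁,…,xₙ] is a split polynomial with respect to T₁,…,T_u. Then p is SOS if and only if each pᵢ = Σ_{a ∈ Support(p), Relat(a) ⊆ Tᵢ} c_a x^a is SOS, for i = 1,…,u. -/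
open MvPolynomial
open scoped Classical

theorem aux_ite_sum {ι : Type*} (S : Finset ι) (P : Prop) [Decidable P] (f : ι → ℝ) :
    (if P then ∑ i ∈ S, f i else 0) = ∑ i ∈ S, if P then f i else 0 := by
  split_ifs <;> simp

theorem aux_isSOS_add {n : ℕ} {p q : MvPolynomial (Fin n) ℝ} (hp : IsSOS p) (hq : IsSOS q) :
    IsSOS (p + q) := by
  obtain ⟨s, f, rfl⟩ := hp
  obtain ⟨t, g, rfl⟩ := hq
  refine ⟨s + t, Fin.append f g, ?_⟩
  rw [Fin.sum_univ_add]
  simp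

theorem aux_isSOS_sum {n : ℕ} {ι : Type*} (S : Finset ι) (f : ι → MvPolynomial (Fin n) ℝ)
    (h : ∀ i, IsSOS (f i)) : IsSOS (∑ i ∈ S, f i) := by
  classical
  induction S using Finset.induction_on with
  | empty => exact ⟨0, fun _ => 0, by simp⟩
  | insert a S ha ih =>
    rw [Finset.sum_insert ha]
    exact aux_isSOS_add (h a) ih

theorem aux_coeff_projRelat {n : ℕ} (p : MvPolynomial (Fin n) ℝ) (G : Finset (Fin n →₀ ℕ))
    (T : Set (Fin n →₀ ℕ)) (e : Fin n →₀ ℕ) :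
    (projRelat p G T).coeff e = if Relat G e ⊆ T then p.coeff e else 0 := by
  have : ∀ a, (if Relat G a ⊆ T then monomial a (p.coeff a) else 0 : MvPolynomial (Fin n) ℝ).coeff e
      = if a = e then (if Relat G e ⊆ T then p.coeff e else 0) else 0 := by
    intro a
    by_cases h : a = e
    · subst h; rw [if_pos rfl]; split_ifs <;> simp
    · split_ifs <;> simp [coeff_monomial, h]
  rw [projRelat, coeff_sum, Finset.sum_congr rfl (fun a _ => this a), Finset.sum_ite_eq']
  by_cases h : e ∈ p.support
  · simp [h]
  · rw [if_neg h, notMem_support_iff.1 h]; simp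

theorem aux_coeff_projN {n : ℕ} (p : MvPolynomial (Fin n) ℝ)
    (T : Set (Fin n →₀ ℕ)) (e : Fin n →₀ ℕ) :
    (projN p T).coeff e = if e ∈ T then p.coeff e else 0 := by
  have : ∀ a, (if a ∈ T then monomial a (p.coeff a) else 0 : MvPolynomial (Fin n) ℝ).coeff e
      = if a = e then (if e ∈ T then p.coeff e else 0) else 0 := by
    intro a
    by_cases h : a = e
    · subst h; rw [if_pos rfl]; split_ifs <;> simp
    · split_ifs <;> simp [coeff_monomial, h]
  rw [projN, coeff_sum, Finset.sum_congr rfl (fun a _ => this a), Finset.sum_ite_eq']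
  by_cases h : e ∈ p.support
  · simp [h]
  · rw [if_neg h, notMem_support_iff.1 h]; simp

theorem aux_key {n : ℕ} (G : Finset (Fin n →₀ ℕ)) (T : Set (Fin n →₀ ℕ))
    (h : ∀ a ∈ sigmaSet G T, ∀ b ∈ sigmaSet G T, Relat G (a + b) ⊆ T)
    (x y : Fin n →₀ ℕ) (hx : x ∈ G) (hy : y ∈ G) :
    Relat G (x + y) ⊆ T ↔ x ∈ sigmaSet G T ∧ y ∈ sigmaSet G T := by
  constructor
  · intro H
    by_cases hxy : x = y
    · subst hxy; exact ⟨⟨hx, H⟩, ⟨hx, H⟩⟩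
    · exact ⟨⟨hx, fun v hv => H (RelatMem.stepL _ x y v hx hy hxy rfl hv)⟩,
        ⟨hy, fun v hv => H (RelatMem.stepR _ x y v hx hy hxy rfl hv)⟩⟩
  · rintro ⟨h1, h2⟩; exact h x h1 y h2

/-- a split polynomial `p` with respect to `T₁,…,T_u` is SOS iff each
`pᵢ = Σ_{a ∈ Support(p), Relat(a) ⊆ Tᵢ} c_a x^a` is SOS. -/
theorem statement8 {n : ℕ} (p : MvPolynomial (Fin n) ℝ) (G : Finset (Fin n →₀ ℕ))
    (u : ℕ) (T : Fin u → Set (Fin n →₀ ℕ)) (hsplit : IsSplit p G u T) :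
    IsSOS p ↔ ∀ i, IsSOS (projRelat p G (T i)) := by
  obtain ⟨hG, -, -, -, h1, h2⟩ := hsplit
  constructor
  · intro hp i
    obtain ⟨s, q, hpq, hq⟩ := hG hp
    refine ⟨s, fun k => projN (q k) (sigmaSet G (T i)), ?_⟩
    ext e
    rw [aux_coeff_projRelat, hpq, coeff_sum, coeff_sum, aux_ite_sum]
    · refine Finset.sum_congr rfl fun k _ => ?_
      rw [sq, sq, coeff_mul, coeff_mul, aux_ite_sum]
      refine Finset.sum_congr rfl fun z hz => ?_
      obtain ⟨x, y⟩ := z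
      rw [Finset.HasAntidiagonal.mem_antidiagonal] at hz
      simp only at hz ⊢
      subst hz
      rw [aux_coeff_projN, aux_coeff_projN]
      by_cases hx : x ∈ (q k).support
      · by_cases hy : y ∈ (q k).support
        · have := aux_key G (T i) (h1 i) x y (hq k hx) (hq k hy)
          simp only [this]
          split_ifs <;> simp_all
        · rw [notMem_support_iff.1 hy]; simp
      · rw [notMem_support_iff.1 hx]; simp
  · intro h
    have : p = ∑ i, projRelat p G (T i) := by
      ext e
      rw [coeff_sum]
      simp only [aux_coeff_projRelat]
      by_cases he : e ∈ p.support
      · obtain ⟨i, hi, hu⟩ := h2 e he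
        rw [Finset.sum_eq_single i]
        · rw [if_pos hi]
        · intro j _ hj
          rw [if_neg fun H => hj (hu j H)]
        · simp
      · rw [notMem_support_iff.1 he]; simp
    rw [this]
    exact aux_isSOS_sum _ _ h
end

section
/- In the setting of the proof that convex cover polynomials are split polynomials: let p ∈ ℝ[x₁,…,xₙ], let G ⊆ ℕⁿ be a finite set satisfying SOSS(p,G) with conv(G+G) = New(p), let F be a face of New(p), and let T = {a ∈ V(p,G) : 2a ∈ F}. Then σ(T) = {r ∈ G : 2r ∈ F}. -/
open MvPolynomial
open scoped Classical

open scoped Pointwise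


lemma aux_pi {n : ℕ} (π : (Fin n → ℝ) →ᵃ[ℝ] ℝ) :
    ∃ g : (Fin n →₀ ℕ) → ℝ, ∀ b c, π (toR (b + c)) = g b + g c := by
  refine ⟨fun b => π.linear (toR b) + π 0 / 2, fun b c => ?_⟩
  have h1 : toR (b + c) = toR b + toR c := by
    ext i; simp [toR]
  have h2 := congrFun π.decomp (toR b + toR c)
  rw [h1, h2]
  simp
  ring

lemma aux_norm {n : ℕ} (r b c : Fin n →₀ ℕ) (h : b + c = r + r) (hne : b ≠ c) :
    2 * ∑ i, (r i : ℝ) ^ 2 < ∑ i, (b i : ℝ) ^ 2 + ∑ i, (c i : ℝ) ^ 2 := by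
  rw [← Finset.sum_add_distrib, Finset.mul_sum]
  have hi : ∀ i, (b i : ℝ) + c i = r i + r i := fun i => by
    have := DFunLike.congr_fun h i
    simp only [Finsupp.add_apply] at this
    exact_mod_cast this
  obtain ⟨j, hj⟩ := DFunLike.ne_iff.mp hne
  apply Finset.sum_lt_sum
  · intro i _
    have := hi i
    nlinarith [sq_nonneg ((b i : ℝ) - c i), sq_nonneg ((b i : ℝ) - r i), sq_nonneg ((c i : ℝ) - r i)]
  · refine ⟨j, Finset.mem_univ _, ?_⟩
    have h1 := hi j
    have h2 : (b j : ℝ) - c j ≠ 0 := sub_ne_zero.mpr (by exact_mod_cast hj)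
    have h3 : 0 < ((b j : ℝ) - c j) ^ 2 := by positivity
    have h4 : (r j : ℝ) = (b j + c j) / 2 := by linarith
    rw [h4]
    nlinarith

lemma aux_V {n : ℕ} {G : Finset (Fin n →₀ ℕ)} {a v : Fin n →₀ ℕ} (h : RelatMem G a v) :
    v ∈ VSet G := by
  induction h with
  | base a c hc hcc huniq =>
    refine ⟨hc, fun b hb r hr h => ⟨huniq b hb r hr (h.trans hcc), ?_⟩⟩
    exact huniq r hr b hb ((add_comm r b).trans (h.trans hcc))
  | stepL a b r v hb hr hne hbr hv ih => exact ih
  | stepR a b r v hb hr hne hbr hv ih => exact ih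

lemma aux_down {n : ℕ} {G : Finset (Fin n →₀ ℕ)} (P : (Fin n →₀ ℕ) → Prop)
    (hP : ∀ b ∈ G, ∀ c ∈ G, P (b + c) → P (b + b) ∧ P (c + c))
    {a v : Fin n →₀ ℕ} (h : RelatMem G a v) : P a → P (v + v) := by
  induction h with
  | base a c hc hcc huniq => exact fun h => hcc ▸ h
  | stepL a b r v hb hr hne hbr hv ih => exact fun h => ih (hP b hb r hr (hbr ▸ h)).1
  | stepR a b r v hb hr hne hbr hv ih => exact fun h => ih (hP b hb r hr (hbr ▸ h)).2

lemma aux_up {n : ℕ} {G : Finset (Fin n →₀ ℕ)} (g : (Fin n →₀ ℕ) → ℝ)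
    (hg0 : ∀ b ∈ G, 0 ≤ g b)
    (hg : ∀ b c r, b + c = r + r → g b + g c = g r + g r) (r : Fin n →₀ ℕ) (hr : r ∈ G)
    (hpos : 0 < g r) : ∃ v, RelatMem G (r + r) v ∧ 0 < g v := by
  by_contra hcon
  let S := G.filter (fun r => 0 < g r ∧ ¬ ∃ v, RelatMem G (r + r) v ∧ 0 < g v)
  have hS : S.Nonempty := ⟨r, by simp only [S, Finset.mem_filter]; exact ⟨hr, hpos, hcon⟩⟩
  obtain ⟨m, hm, hmax⟩ := S.exists_max_image
    (fun b => toLex (g b, ∑ i, (b i : ℝ) ^ 2)) hS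
  simp only [S, Finset.mem_filter, Prod.Lex.toLex_le_toLex] at hm hmax
  obtain ⟨hmG, hmpos, hmno⟩ := hm
  have hex : ∃ b ∈ G, ∃ c ∈ G, b + c = m + m ∧ b ≠ c := by
    by_contra hno
    push Not at hno
    refine hmno ⟨m, .base _ m hmG rfl fun b hb c hc h => ?_, hmpos⟩
    have hbc := hno b hb c hc h
    subst hbc
    ext i
    have := DFunLike.congr_fun h i
    simp only [Finsupp.add_apply] at this
    omega
  obtain ⟨b, hb, c, hc, hbc, hne⟩ := hex
  have hbS : 0 < g b → _ := fun h => hmax b ⟨hb, h, fun ⟨v, hv, hv0⟩ =>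
    hmno ⟨v, .stepL _ b c v hb hc hne hbc hv, hv0⟩⟩
  have hcS : 0 < g c → _ := fun h => hmax c ⟨hc, h, fun ⟨v, hv, hv0⟩ =>
    hmno ⟨v, .stepR _ b c v hb hc hne hbc hv, hv0⟩⟩
  have h1 := hg b c m hbc
  have h2 := aux_norm m b c hbc hne
  have hb0 := hg0 b hb
  have hc0 := hg0 c hc
  rcases hb0.eq_or_lt with hb1 | hb1
  · rcases hcS (by linarith) with h | h
    · linarith
    · linarith [h.1]
  · rcases hc0.eq_or_lt with hc1 | hc1
    · rcases hbS hb1 with h | h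
      · linarith
      · linarith [h.1]
    · rcases hbS hb1 with h | h <;> rcases hcS hc1 with h' | h'
      · linarith
      · linarith [h'.1]
      · linarith [h.1]
      · linarith [h.2, h'.2]

/-- for `G` with `SOSS(p,G)` and `conv(G+G) = New(p)`, a face `F` of `New(p)`
and `T = {a ∈ V(p,G) : 2a ∈ F}`, one has `σ(T) = {r ∈ G : 2r ∈ F}`. -/
theorem statement10 {n : ℕ} (p : MvPolynomial (Fin n) ℝ) (G : Finset (Fin n →₀ ℕ))
    (hG : SOSS p G)
    (hGG : convexHull ℝ (toR '' ((G : Set (Fin n →₀ ℕ)) + (G : Set (Fin n →₀ ℕ)))) = newton p)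
    (F : Set (Fin n → ℝ)) (hF : IsFace (newton p) F) :
    sigmaSet G {a | a ∈ VSet G ∧ toR (a + a) ∈ F} = {r | r ∈ G ∧ toR (r + r) ∈ F} := by
  have hN : ∀ b ∈ G, ∀ c ∈ G, toR (b + c) ∈ newton p := fun b hb c hc => by
    rw [← hGG]
    exact subset_convexHull ℝ _ ⟨b + c, Set.add_mem_add hb hc, rfl⟩
  obtain ⟨hFN, rfl | ⟨π, h0, hpos⟩⟩ := hF
  · ext r
    constructor
    · rintro ⟨hr, -⟩
      exact ⟨hr, hN r hr r hr⟩
    · rintro ⟨hr, -⟩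
      exact ⟨hr, fun v hv => ⟨aux_V hv, hN v (aux_V hv).1 v (aux_V hv).1⟩⟩
  · obtain ⟨g, hg⟩ := aux_pi π
    have hnn : ∀ b ∈ G, 0 ≤ g b := fun b hb => by
      have h1 := hg b b
      by_cases hbF : toR (b + b) ∈ F
      · linarith [h0 _ hbF]
      · linarith [hpos _ ⟨hN b hb b hb, hbF⟩]
    have hiff : ∀ b ∈ G, ∀ c ∈ G, π (toR (b + c)) = 0 → toR (b + c) ∈ F :=
      fun b hb c hc h => by
        by_contra hh
        linarith [hpos _ ⟨hN b hb c hc, hh⟩]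
    ext r
    constructor
    · rintro ⟨hr, hT⟩
      refine ⟨hr, ?_⟩
      by_contra hrF
      have hp := hpos _ ⟨hN r hr r hr, hrF⟩
      rw [hg] at hp
      obtain ⟨v, hv, hv0⟩ := aux_up g hnn
        (fun b c r h => by rw [← hg, ← hg, h]) r hr (by linarith)
      have := h0 _ (hT hv).2
      rw [hg] at this
      linarith
    · rintro ⟨hr, hrF⟩
      refine ⟨hr, fun v hv => ⟨aux_V hv, ?_⟩⟩
      refine aux_down (fun a => toR a ∈ F) (fun b hb c hc h => ?_) hv hrF
      have h1 := h0 _ h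
      rw [hg] at h1
      have hb0 := hnn b hb
      have hc0 := hnn c hc
      exact ⟨hiff b hb b hb (by rw [hg]; linarith), hiff c hc c hc (by rw [hg]; linarith)⟩
end

section
/- If p ∈ ℝ[x₁,…,xₙ] is SOS and v is a vertex of the Newton polytope New(p) (i.e., {v} is a face of New(p)), then all coordinates of v are even natural numbers and the coefficient of x^v in p is strictly positive. -/
open MvPolynomial
open scoped Classical

theorem sq_coeff_aux {n : ℕ} (q : MvPolynomial (Fin n) ℝ) (m : Fin n →₀ ℕ)
    (h : ∀ b ∈ q.support, ∀ r ∈ q.support, b + r = m + m → b = m ∧ r = m) :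
    (q ^ 2).coeff (m + m) = (q.coeff m) ^ 2 := by
  rw [sq, MvPolynomial.coeff_mul, Finset.sum_eq_single (m, m)]
  · ring
  · rintro ⟨b, r⟩ hbr hne
    by_contra hc
    rw [Finset.HasAntidiagonal.mem_antidiagonal] at hbr
    have hb : q.coeff b ≠ 0 := left_ne_zero_of_mul hc
    have hr : q.coeff r ≠ 0 := right_ne_zero_of_mul hc
    obtain ⟨h1, h2⟩ := h b (MvPolynomial.mem_support_iff.2 hb) r
      (MvPolynomial.mem_support_iff.2 hr) hbr
    exact hne (by rw [h1, h2])
  · intro h'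
    exact absurd ((Finset.HasAntidiagonal.mem_antidiagonal (n := m + m) (a := (m, m))).2 rfl) h'

theorem exists_min_aux {n : ℕ} (l : (Fin n →₀ ℕ) → ℝ) (hl : ∀ a b, l (a + b) = l a + l b)
    (G : Finset (Fin n →₀ ℕ)) (hG : G.Nonempty) :
    ∃ m ∈ G, (∀ a ∈ G, l m ≤ l a) ∧
      ∀ b ∈ G, ∀ r ∈ G, b + r = m + m → b = m ∧ r = m := by
  obtain ⟨m₀, hm₀, hmin⟩ := G.exists_min_image l hG
  obtain ⟨m, hm, hmin2⟩ := (G.filter (fun a => l a = l m₀)).exists_min_image toLex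
    ⟨m₀, by simp [hm₀]⟩
  rw [Finset.mem_filter] at hm
  refine ⟨m, hm.1, fun a ha => hm.2 ▸ hmin a ha, fun b hb r hr hbr => ?_⟩
  have e : l b + l r = l m + l m := by rw [← hl, ← hl, hbr]
  have h1 := hmin b hb
  have h2 := hmin r hr
  have h3 := hm.2
  have hb' := hmin2 b (by rw [Finset.mem_filter]; exact ⟨hb, by linarith⟩)
  have hr' := hmin2 r (by rw [Finset.mem_filter]; exact ⟨hr, by linarith⟩)
  have e2 : toLex m + toLex m = toLex b + toLex r := congrArg toLex hbr.symm
  obtain ⟨x, y⟩ := (add_eq_add_iff_eq_and_eq hb' hr').1 e2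
  exact ⟨toLex.injective x.symm, toLex.injective y.symm⟩

/-- if `p` is SOS and `v` is a vertex of `New(p)`, then `v` is a lattice
point all of whose coordinates are even, and the coefficient of `x^v` in `p` is positive. -/
theorem statement14 {n : ℕ} (p : MvPolynomial (Fin n) ℝ) (hsos : IsSOS p)
    (v : Fin n → ℝ) (hv : IsFace (newton p) {v}) :
    ∃ w : Fin n →₀ ℕ, toR w = v ∧ (∀ i, Even (w i)) ∧ 0 < p.coeff w := by
  obtain ⟨hvN, hF⟩ := hv
  have hπ : ∃ π : (Fin n → ℝ) →ᵃ[ℝ] ℝ, π v = 0 ∧ ∀ x ∈ newton p, x ≠ v → 0 < π x := by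
    rcases hF with h | ⟨π, h0, h1⟩
    · refine ⟨0, rfl, fun x hx hne => ?_⟩
      rw [← h] at hx
      exact absurd hx hne
    · exact ⟨π, h0 v rfl, fun x hx hne => h1 x ⟨hx, hne⟩⟩
  obtain ⟨π, hπv, hπ⟩ := hπ
  have hsub : ∀ a ∈ p.support, toR a ∈ newton p := fun a ha =>
    subset_convexHull ℝ _ ⟨a, ha, rfl⟩
  have hw : ∃ w ∈ p.support, toR w = v := by
    by_contra hcon
    push Not at hcon
    have hc : Convex ℝ (π ⁻¹' Set.Ioi (0:ℝ)) := (convex_Ioi (0:ℝ)).affine_preimage π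
    have hh : newton p ⊆ π ⁻¹' Set.Ioi (0:ℝ) := by
      refine convexHull_min ?_ hc
      rintro _ ⟨a, ha, rfl⟩
      exact hπ _ (hsub a ha) (hcon a ha)
    have := hh (hvN rfl)
    simp [hπv] at this
  obtain ⟨w, hwp, rfl⟩ := hw
  obtain ⟨s, q, hp⟩ := hsos
  let l : (Fin n →₀ ℕ) → ℝ := fun a => π.linear (toR a)
  have hl : ∀ a b, l (a + b) = l a + l b := by
    intro a b
    have : toR (a + b) = toR a + toR b := by ext i; simp [toR]
    simp only [l, this, map_add]
  have hlπ : ∀ a, π (toR a) = l a + π 0 := by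
    intro a
    have := π.map_vadd 0 (toR a)
    simpa using this
  let G : Finset (Fin n →₀ ℕ) := Finset.univ.biUnion fun i => (q i).support
  have hdec : ∃ b ∈ G, ∃ r ∈ G, b + r = w := by
    rw [MvPolynomial.mem_support_iff, hp, MvPolynomial.coeff_sum] at hwp
    obtain ⟨i, -, hi⟩ := Finset.exists_ne_zero_of_sum_ne_zero hwp
    rw [sq, MvPolynomial.coeff_mul] at hi
    obtain ⟨⟨b, r⟩, hbr, hi⟩ := Finset.exists_ne_zero_of_sum_ne_zero hi
    refine ⟨b, Finset.mem_biUnion.2 ⟨i, Finset.mem_univ _, MvPolynomial.mem_support_iff.2 (left_ne_zero_of_mul hi)⟩,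
      r, Finset.mem_biUnion.2 ⟨i, Finset.mem_univ _, MvPolynomial.mem_support_iff.2 (right_ne_zero_of_mul hi)⟩,
      Finset.HasAntidiagonal.mem_antidiagonal.1 hbr⟩
  obtain ⟨b, hb, r, hr, hbr⟩ := hdec
  obtain ⟨m, hm, hmin, huniq⟩ := exists_min_aux l hl G ⟨b, hb⟩
  have hiG : ∀ i, ∀ a ∈ (q i).support, a ∈ G := fun i a ha =>
    Finset.mem_biUnion.2 ⟨i, Finset.mem_univ _, ha⟩
  have hpos : 0 < p.coeff (m + m) := by
    rw [hp, MvPolynomial.coeff_sum]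
    obtain ⟨i, -, hi⟩ := Finset.mem_biUnion.1 hm
    have hs : ∀ j, ((q j) ^ 2).coeff (m + m) = ((q j).coeff m) ^ 2 := fun j =>
      sq_coeff_aux (q j) m fun b hb r hr => huniq b (hiG j b hb) r (hiG j r hr)
    simp only [hs]
    refine Finset.sum_pos' (fun j _ => sq_nonneg _) ⟨i, Finset.mem_univ _, ?_⟩
    have := MvPolynomial.mem_support_iff.1 hi
    positivity
  have heq : toR (m + m) = toR w := by
    by_contra hne
    have h1 := hπ _ (hsub (m + m) (MvPolynomial.mem_support_iff.2 hpos.ne')) hne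
    rw [hlπ, hl] at h1
    rw [hlπ, ← hbr, hl] at hπv
    have := hmin b hb
    have := hmin r hr
    linarith
  exact ⟨m + m, heq, fun i => ⟨m i, rfl⟩, hpos⟩
end

section
/- The Motzkin polynomial f = x₁⁴x₂² + x₁²x₂⁴ − 3x₁²x₂² + 1 ∈ ℝ[x₁,x₂] is not a sum of squares of polynomials. -/
open MvPolynomial
open scoped Classical

theorem motz_deg {R : Type*} [CommRing R] {s : ℕ}
    (hR : ∀ r : Fin s → R, ∑ i, r i ^ 2 = 0 → ∀ i, r i = 0)
    (P : Fin s → Polynomial R) (k : ℕ) (h : (∑ i, P i ^ 2).natDegree ≤ 2 * k) (i : Fin s) :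
    (P i).natDegree ≤ k := by
  by_contra hlt
  push Not at hlt
  obtain ⟨j, -, hj⟩ := Finset.exists_max_image Finset.univ (fun i => (P i).natDegree) ⟨i, by simp⟩
  have hkj : k < (P j).natDegree := lt_of_lt_of_le hlt (hj i (by simp))
  have h0 : (∑ i, P i ^ 2).coeff (2 * (P j).natDegree) = 0 :=
    Polynomial.coeff_eq_zero_of_natDegree_lt (by omega)
  rw [Polynomial.finsetSum_coeff] at h0
  have h1 := hR (fun i => (P i).coeff (P j).natDegree) (by
    rw [← h0]
    refine Finset.sum_congr rfl fun i _ => ?_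
    rw [Polynomial.coeff_pow_of_natDegree_le (hj i (by simp))]) j
  have h2 : P j = 0 := Polynomial.leadingCoeff_eq_zero.mp h1
  rw [h2] at hkj
  simp at hkj

theorem motz_real {s : ℕ} (r : Fin s → ℝ) (h : ∑ i, r i ^ 2 = 0) (i : Fin s) : r i = 0 := by
  have := (Finset.sum_eq_zero_iff_of_nonneg (fun i _ => sq_nonneg (r i))).mp h i (by simp)
  exact pow_eq_zero_iff (by norm_num) |>.mp this

theorem motz_poly {s : ℕ} (r : Fin s → Polynomial ℝ) (h : ∑ i, r i ^ 2 = 0) (i : Fin s) :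
    r i = 0 := by
  refine Polynomial.funext fun x => ?_
  have := congrArg (Polynomial.eval x) h
  simp only [Polynomial.eval_finsetSum, Polynomial.eval_pow, Polynomial.eval_zero] at this
  simpa using motz_real (fun i => (r i).eval x) this i

/-- the Motzkin polynomial is not a sum of squares. -/
theorem statement15 :
    ¬ IsSOS ((X 0) ^ 4 * (X 1) ^ 2 + (X 0) ^ 2 * (X 1) ^ 4 - 3 * (X 0) ^ 2 * (X 1) ^ 2 + 1 :
      MvPolynomial (Fin 2) ℝ) := by
  rintro ⟨s, q, h⟩
  let φ : MvPolynomial (Fin 2) ℝ →ₐ[ℝ] Polynomial (Polynomial ℝ) :=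
    aeval ![Polynomial.X, Polynomial.C Polynomial.X]
  have h := congrArg φ h
  set P : Fin s → Polynomial (Polynomial ℝ) := fun i => φ (q i) with hP
  have hf : ∑ i, P i ^ 2 = Polynomial.C (Polynomial.X ^ 2) * Polynomial.X ^ 4
      + Polynomial.C (Polynomial.X ^ 4 - 3 * Polynomial.X ^ 2) * Polynomial.X ^ 2
      + Polynomial.C 1 := by
    have e : φ (∑ i, q i ^ 2) = ∑ i, P i ^ 2 := by simp [hP]
    rw [← e, ← h]
    have h3 : (Polynomial.C (3 : Polynomial ℝ)) = 3 := rfl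
    simp [φ, h3]
    ring
  clear_value P
  clear h hP
  have hd : ∀ i, (P i).natDegree ≤ 2 := motz_deg motz_poly P 2 (by rw [hf]; compute_degree)
  have h4 : ∑ i, (P i).coeff 2 ^ 2 = Polynomial.X ^ 2 := by
    have := congrArg (fun p => Polynomial.coeff p (2 * 2)) hf
    simp only [Polynomial.finsetSum_coeff] at this
    rw [Finset.sum_congr rfl fun i _ => Polynomial.coeff_pow_of_natDegree_le (hd i)] at this
    rw [this]
    simp [Polynomial.coeff_X_pow, Polynomial.coeff_one,
      -map_pow, -map_sub]
  have h0 : ∑ i, (P i).coeff 0 ^ 2 = 1 := by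
    have := congrArg (fun p => Polynomial.coeff p 0) hf
    simp only [Polynomial.finsetSum_coeff, pow_two, Polynomial.mul_coeff_zero] at this
    simpa [pow_two] using this
  have h2 : ∑ i, (2 * ((P i).coeff 0 * (P i).coeff 2) + (P i).coeff 1 ^ 2)
      = Polynomial.X ^ 4 - 3 * Polynomial.X ^ 2 := by
    have := congrArg (fun p => Polynomial.coeff p 2) hf
    simp only [Polynomial.finsetSum_coeff] at this
    have e : ∀ i, (P i ^ 2).coeff 2
        = 2 * ((P i).coeff 0 * (P i).coeff 2) + (P i).coeff 1 ^ 2 := by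
      intro i
      rw [pow_two, Polynomial.coeff_mul]
      simp [Finset.Nat.antidiagonal_succ]
      ring
    rw [← Finset.sum_congr rfl fun i _ => e i, this]
    simp [Polynomial.coeff_X_pow, Polynomial.coeff_one,
      -map_pow, -map_sub]
  have hA : ∀ i, ((P i).coeff 2).natDegree ≤ 1 :=
    motz_deg motz_real _ 1 (by rw [h4]; compute_degree)
  have hC : ∀ i, ((P i).coeff 0).natDegree ≤ 0 :=
    motz_deg motz_real _ 0 (by rw [h0]; simp)
  have hE : ∀ i, ((P i).map (Polynomial.evalRingHom 0)).natDegree ≤ 0 := by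
    refine motz_deg motz_real _ 0 ?_
    have := congrArg (Polynomial.map (Polynomial.evalRingHom (0 : ℝ))) hf
    simp [Polynomial.map_sum] at this
    rw [this]; simp
  have hB : ∀ i, ((P i).coeff 1).coeff 0 = 0 := by
    intro i
    have := Polynomial.coeff_eq_zero_of_natDegree_lt (lt_of_le_of_lt (hE i) one_pos)
    rw [Polynomial.coeff_map] at this
    rw [Polynomial.coeff_zero_eq_eval_zero]
    exact this
  have hD : ∀ i, ((P i).coeff 2).coeff 0 = 0 := by
    intro i
    have := Polynomial.coeff_eq_zero_of_natDegree_lt (lt_of_le_of_lt (hE i) two_pos)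
    rw [Polynomial.coeff_map] at this
    rw [Polynomial.coeff_zero_eq_eval_zero]
    exact this
  have key := congrArg (fun p => Polynomial.coeff p 2) h2
  have r : (Polynomial.X ^ 4 - 3 * Polynomial.X ^ 2 : Polynomial ℝ).coeff 2 = -3 := by
    have : (3 : Polynomial ℝ) = Polynomial.C 3 := rfl
    rw [this, Polynomial.coeff_sub, Polynomial.coeff_C_mul]
    simp [Polynomial.coeff_X_pow]
  simp only [Polynomial.finsetSum_coeff, r] at key
  have e : ∀ i, (2 * ((P i).coeff 0 * (P i).coeff 2) + (P i).coeff 1 ^ 2).coeff 2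
      = ((P i).coeff 1).coeff 1 ^ 2 := by
    intro i
    have a2 := Polynomial.coeff_eq_zero_of_natDegree_lt (lt_of_le_of_lt (hA i) one_lt_two)
    have : (2 : Polynomial ℝ) = Polynomial.C 2 := rfl
    rw [Polynomial.eq_C_of_natDegree_le_zero (hC i), this, Polynomial.coeff_add,
      Polynomial.coeff_C_mul, Polynomial.coeff_C_mul, a2, pow_two, Polynomial.coeff_mul]
    simp [Finset.Nat.antidiagonal_succ, hB i]
    ring
  rw [Finset.sum_congr rfl fun i _ => e i] at key
  have : 0 ≤ ∑ i, ((P i).coeff 1).coeff 1 ^ 2 := Finset.sum_nonneg fun i _ => sq_nonneg _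
  linarith
end

section
/- The Choi–Lam polynomial q = 1 + x²y² + y²z² + z²x² − 4xyz ∈ ℝ[x,y,z] is not a sum of squares of polynomials. -/
open MvPolynomial
open scoped Classical

theorem natDegree_le_of_sq_le (g h : Polynomial ℝ) (d : ℕ) (hd : h.natDegree ≤ 2 * d)
    (hgh : ∀ t, (g.eval t) ^ 2 ≤ h.eval t) : g.natDegree ≤ d := by
  by_contra hlt
  push Not at hlt
  have hg : g ≠ 0 := by
    rintro rfl
    simp at hlt
  have hg2 : (g ^ 2).natDegree = 2 * g.natDegree := by simp [Polynomial.natDegree_pow]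
  have hdeg : h.degree < (g ^ 2).degree := by
    apply Polynomial.degree_lt_degree
    omega
  have ho := (Polynomial.isLittleO_atTop_of_degree_lt h (g ^ 2) hdeg).bound
    (show (0 : ℝ) < 1 / 2 by norm_num)
  have hr := Polynomial.eventually_atTop_not_isRoot g hg
  obtain ⟨t, h1, h2⟩ := (ho.and hr).exists
  have h3 := hgh t
  have h4 : 0 < (g.eval t) ^ 2 := by
    have : g.eval t ≠ 0 := h2
    positivity
  rw [Polynomial.eval_pow, Real.norm_eq_abs, Real.norm_eq_abs, abs_of_pos h4] at h1
  have h5 := le_abs_self (h.eval t)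
  linarith

theorem key_quad (p q : MvPolynomial (Fin 3) ℝ) (hq : ∀ v, (eval v q) ^ 2 ≤ eval v p)
    (w : Fin 3 → Polynomial ℝ) (h : Polynomial ℝ)
    (d : ℕ) (hd : h.natDegree ≤ 2 * d)
    (hh : ∀ t, eval (fun i => (w i).eval t) p = h.eval t) :
    ∃ g : Polynomial ℝ, g.natDegree ≤ d ∧ ∀ t, eval (fun i => (w i).eval t) q = g.eval t := by
  have e : ∀ t, eval (fun i => (w i).eval t) q = (aeval w q).eval t := by
    intro t
    have := MvPolynomial.map_aeval w (Polynomial.evalRingHom t) q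
    simp only [Polynomial.coe_evalRingHom] at this
    rw [this, MvPolynomial.eval]
    congr 1
    congr 1
    ext; simp
  refine ⟨aeval w q, ?_, e⟩
  apply natDegree_le_of_sq_le _ h d hd
  intro t
  rw [← e, ← hh]
  exact hq _

theorem key_even (q : MvPolynomial (Fin 3) ℝ)
    (hq : ∀ v : Fin 3 → ℝ, (eval v q) ^ 2 ≤ 1 + (v 0) ^ 2 * (v 1) ^ 2 + (v 1) ^ 2 * (v 2) ^ 2
      + (v 2) ^ 2 * (v 0) ^ 2 - 4 * v 0 * v 1 * v 2) :
    eval ![-1, -1, -1] q = eval ![1, 1, 1] q := by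
  have K : ∀ (w : Fin 3 → Polynomial ℝ) (d : ℕ),
      (1 + (w 0) ^ 2 * (w 1) ^ 2 + (w 1) ^ 2 * (w 2) ^ 2
      + (w 2) ^ 2 * (w 0) ^ 2 - 4 * w 0 * w 1 * w 2).natDegree ≤ 2 * d →
      ∃ g : Polynomial ℝ, g.natDegree ≤ d ∧
        ∀ t, eval ![(w 0).eval t, (w 1).eval t, (w 2).eval t] q = g.eval t := by
    intro w d hd
    obtain ⟨g, h1, h2⟩ := key_quad (1 + (X 0) ^ 2 * (X 1) ^ 2 + (X 1) ^ 2 * (X 2) ^ 2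
      + (X 2) ^ 2 * (X 0) ^ 2 - 4 * X 0 * X 1 * X 2) q
      (fun v => by simpa using hq v) w _ d hd (fun t => by simp)
    refine ⟨g, h1, fun t => ?_⟩
    rw [← h2]
    congr 2
    funext i
    fin_cases i <;> rfl
  have A : ∀ g : Polynomial ℝ, g.natDegree ≤ 1 → ∀ t,
      g.eval t = g.eval 0 + t * (g.eval 1 - g.eval 0) := by
    intro g hg t
    rw [Polynomial.eq_X_add_C_of_natDegree_le_one hg]
    simp
    ring
  have Z : ∀ x y z, eval ![x, y, z] q =
      eval ![x, y, 0] q + z * (eval ![x, y, 1] q - eval ![x, y, 0] q) := by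
    intro x y z
    obtain ⟨g, h1, h2⟩ := K ![Polynomial.C x, Polynomial.C y, Polynomial.X] 1
      (by simp; compute_degree)
    simp at h2
    simp only [h2]
    exact A g h1 z
  have Y : ∀ x y z, eval ![x, y, z] q =
      eval ![x, 0, z] q + y * (eval ![x, 1, z] q - eval ![x, 0, z] q) := by
    intro x y z
    obtain ⟨g, h1, h2⟩ := K ![Polynomial.C x, Polynomial.X, Polynomial.C z] 1
      (by simp; compute_degree)
    simp at h2
    simp only [h2]
    exact A g h1 y
  have W : ∀ x y z, eval ![x, y, z] q =
      eval ![0, y, z] q + x * (eval ![1, y, z] q - eval ![0, y, z] q) := by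
    intro x y z
    obtain ⟨g, h1, h2⟩ := K ![Polynomial.X, Polynomial.C y, Polynomial.C z] 1
      (by simp; compute_degree)
    simp at h2
    simp only [h2]
    exact A g h1 x
  have B : ∀ g : Polynomial ℝ, g.natDegree ≤ 0 → g.eval 1 = g.eval 0 := by
    intro g hg
    rw [Polynomial.eq_C_of_natDegree_le_zero hg]
    simp
  have z1 : eval ![0, 0, 1] q = eval ![0, 0, 0] q := by
    obtain ⟨g, h1, h2⟩ := K ![0, 0, Polynomial.X] 0 (by simp)
    simp at h2
    simp only [h2]
    exact B g (by simpa using h1)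
  have y1 : eval ![0, 1, 0] q = eval ![0, 0, 0] q := by
    obtain ⟨g, h1, h2⟩ := K ![0, Polynomial.X, 0] 0 (by simp)
    simp at h2
    simp only [h2]
    exact B g (by simpa using h1)
  have x1 : eval ![1, 0, 0] q = eval ![0, 0, 0] q := by
    obtain ⟨g, h1, h2⟩ := K ![Polynomial.X, 0, 0] 0 (by simp)
    simp at h2
    simp only [h2]
    exact B g (by simpa using h1)
  have F : ∀ x y z, eval ![x, y, z] q = eval ![0, 0, 0] q
      + x * y * (eval ![1, 1, 0] q - eval ![0, 0, 0] q)
      + y * z * (eval ![0, 1, 1] q - eval ![0, 0, 0] q)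
      + x * z * (eval ![1, 0, 1] q - eval ![0, 0, 0] q)
      + x * y * z * (eval ![1, 1, 1] q - eval ![1, 1, 0] q - eval ![0, 1, 1] q
        - eval ![1, 0, 1] q + 2 * eval ![0, 0, 0] q) := by
    intro x y z
    rw [Z x y z, Y x y 0, Y x y 1, W x 0 0, W x 1 0, W x 0 1, W x 1 1, x1, y1, z1]
    ring
  obtain ⟨g, h1, h2⟩ := K ![Polynomial.X, Polynomial.X, Polynomial.X] 2
    (by simp; compute_degree)
  simp at h2
  have g2 : ∀ t, g.eval t = g.coeff 0 + g.coeff 1 * t + g.coeff 2 * t ^ 2 := by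
    intro t
    rw [Polynomial.eval_eq_sum_range' (show g.natDegree < 3 by omega)]
    simp [Finset.sum_range_succ]
  have e0 := F 2 2 2
  have e1 := F (-1) (-1) (-1)
  have e2 := h2 0
  have e3 := h2 1
  have e4 := h2 (-1)
  have e5 := h2 2
  rw [g2] at e2 e3 e4 e5
  linarith

/-- the Choi–Lam polynomial is not a sum of squares. -/
theorem statement16 :
    ¬ IsSOS (1 + (X 0) ^ 2 * (X 1) ^ 2 + (X 1) ^ 2 * (X 2) ^ 2 + (X 2) ^ 2 * (X 0) ^ 2
        - 4 * X 0 * X 1 * X 2 : MvPolynomial (Fin 3) ℝ) := by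
  rintro ⟨s, q, hq⟩
  have ev : ∀ v : Fin 3 → ℝ, 1 + (v 0) ^ 2 * (v 1) ^ 2 + (v 1) ^ 2 * (v 2) ^ 2
      + (v 2) ^ 2 * (v 0) ^ 2 - 4 * v 0 * v 1 * v 2 = ∑ i, (eval v (q i)) ^ 2 := by
    intro v
    have := congrArg (eval v) hq
    simpa using this
  have he : ∀ i, eval ![-1, -1, -1] (q i) = eval ![1, 1, 1] (q i) := by
    intro i
    apply key_even
    intro v
    rw [ev]
    exact Finset.single_le_sum (f := fun i => (eval v (q i)) ^ 2)
      (fun j _ => sq_nonneg _) (Finset.mem_univ i)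
  have a := ev ![-1, -1, -1]
  have b := ev ![1, 1, 1]
  simp only [he] at a
  rw [← b] at a
  simp at a
  norm_num at a
end
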